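/- arXiv:1102.4469 — 5 statements merged into one kernel-verified Lean document; each statement's English description precedes it below -/
import Mathlib

section
/- For an 802.11 WLAN with n ≥ 2 stations and parameters 0 < σ ≤ T_c, T_s ≥ T_c > 0 and mean payload sizes L_i > 0, the rate region R(1) is log-convex. That is: for every pair of attempt-probability vectors τ¹, τ² ∈ (0,1)^n and every α ∈ [0,1], there exists τ* ∈ (0,1)^n such that for every i ∈ {1,…,n}, s_i(τ*) = s_i(τ¹)^α · s_i(τ²)^{1−α}; equivalently, the set {(log s_1(τ), …, log s_n(τ)) : τ ∈ (0,1)^n} is convex. -/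
open Finset

/-- Probability that all stations are idle. -/
noncomputable def Pidle {n : ℕ} (τ : Fin n → ℝ) : ℝ :=
  ∏ k, (1 - τ k)

/-- Probability of a successful transmission. -/
noncomputable def Psucc {n : ℕ} (τ : Fin n → ℝ) : ℝ :=
  ∑ i, τ i * ∏ k ∈ univ.erase i, (1 - τ k)

/-- Per-station throughput in an 802.11 WLAN. -/
noncomputable def throughput {n : ℕ} (σ Ts Tc : ℝ) (L : Fin n → ℝ)
    (τ : Fin n → ℝ) (i : Fin n) : ℝ :=
  (τ i * ∏ k ∈ univ.erase i, (1 - τ k)) * L i /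
    (σ * Pidle τ + Ts * Psucc τ + Tc * (1 - Pidle τ - Psucc τ))

/-! The odds `xᵢ = τᵢ / (1 - τᵢ)` range over all positive vectors. Exactly the stations in `S`
transmit with probability `Pidle · ∏_{i ∈ S} xᵢ`, so the mean slot duration is `Pidle · F(x)` for
a polynomial `F` with nonnegative coefficients and constant term `σ > 0`, and `sᵢ = xᵢ Lᵢ / F(x)`.
By Hölder's inequality `log F` is convex in the variables `log xᵢ`, so the weighted geometric mean
`z` of two odds vectors `x`, `y` satisfies `F(z) ≤ E := F(x)ᵃ F(y)ᵇ`. Moving along the ray `t z`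
leaves the ratios of the throughputs unchanged, and `F(t z) / t` tends to `∞` as `t → 0` and is at
most `E` at `t = 1`; where it equals `E`, the throughputs are the required geometric means. -/

theorem rpow_mul_rpow_of_add_eq_one {w a b : ℝ} (hw : 0 ≤ w) (ha : 0 ≤ a) (hb : 0 ≤ b)
    (hab : a + b = 1) : w ^ a * w ^ b = w := by
  rw [← Real.rpow_add_of_nonneg hw ha hb, hab, Real.rpow_one]

theorem sum_rpow_mul_rpow_le {ι : Type*} (s : Finset ι) {f g : ι → ℝ} {a b : ℝ}
    (ha : 0 ≤ a) (hb : 0 ≤ b) (hab : a + b = 1)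
    (hf : ∀ i ∈ s, 0 ≤ f i) (hg : ∀ i ∈ s, 0 ≤ g i) :
    ∑ i ∈ s, f i ^ a * g i ^ b ≤ (∑ i ∈ s, f i) ^ a * (∑ i ∈ s, g i) ^ b := by
  rcases ha.eq_or_lt with rfl | ha
  · obtain rfl : b = 1 := by linarith
    simp
  rcases hb.eq_or_lt with rfl | hb
  · obtain rfl : a = 1 := by linarith
    simp
  have holder := Real.inner_le_Lp_mul_Lq_of_nonneg s (Real.HolderConjugate.inv_inv ha hb hab)
    (fun i hi => Real.rpow_nonneg (hf i hi) a) (fun i hi => Real.rpow_nonneg (hg i hi) b)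
  have sum_f : ∑ i ∈ s, (f i ^ a) ^ a⁻¹ = ∑ i ∈ s, f i :=
    sum_congr rfl fun i hi => Real.rpow_rpow_inv (hf i hi) ha.ne'
  have sum_g : ∑ i ∈ s, (g i ^ b) ^ b⁻¹ = ∑ i ∈ s, g i :=
    sum_congr rfl fun i hi => Real.rpow_rpow_inv (hg i hi) hb.ne'
  simpa only [sum_f, sum_g, one_div, inv_inv] using holder

theorem exists_pos_eq_mul_of_le {g : ℝ → ℝ} {E : ℝ} (hg : ContinuousOn g (Set.Icc 0 1))
    (h0 : 0 < g 0) (h1 : g 1 ≤ E) : ∃ t, 0 < t ∧ g t = t * E := by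
  have hcont : ContinuousOn (fun t => g t - t * E) (Set.Icc 0 1) := by fun_prop
  have hzero : (0 : ℝ) ∈ Set.Icc (g 1 - 1 * E) (g 0 - 0 * E) := by
    constructor <;> linarith
  obtain ⟨t, ⟨ht, -⟩, hgt⟩ := intermediate_value_Icc' zero_le_one hcont hzero
  have hgt : g t = t * E := sub_eq_zero.1 hgt
  refine ⟨t, ht.lt_of_ne' ?_, hgt⟩
  rintro rfl
  linarith

section Multiaffine

variable {ι : Type*} [Fintype ι]

/-- The multiaffine polynomial in the variables `x i` with coefficient `c S` at the squarefree
monomial `∏ i ∈ S, x i`. In the odds of the stations, the mean duration of a slot relative to the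
idle probability has this form, `c S` being the duration of a slot in which exactly the stations in
`S` transmit. -/
def multiaffine (c : Finset ι → ℝ) (x : ι → ℝ) : ℝ :=
  ∑ S, c S * ∏ i ∈ S, x i

variable {c : Finset ι → ℝ} {x y : ι → ℝ} {a b : ℝ}

theorem continuous_multiaffine (c : Finset ι → ℝ) : Continuous (multiaffine c) := by
  unfold multiaffine
  fun_prop

theorem multiaffine_zero (c : Finset ι → ℝ) : multiaffine c 0 = c ∅ := by
  rw [multiaffine, Fintype.sum_eq_single ∅]
  · simp
  · intro S hS
    obtain ⟨i, hi⟩ := nonempty_iff_ne_empty.2 hS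
    rw [prod_eq_zero hi rfl, mul_zero]

theorem multiaffine_pos (hc : ∀ S, 0 ≤ c S) (hc₀ : 0 < c ∅) (hx : ∀ i, 0 ≤ x i) :
    0 < multiaffine c x :=
  sum_pos' (fun S _ => mul_nonneg (hc S) (prod_nonneg fun i _ => hx i))
    ⟨∅, mem_univ _, by simpa using hc₀⟩

theorem multiaffine_rpow_mul_rpow_le (hc : ∀ S, 0 ≤ c S) (hx : ∀ i, 0 ≤ x i) (hy : ∀ i, 0 ≤ y i)
    (ha : 0 ≤ a) (hb : 0 ≤ b) (hab : a + b = 1) :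
    multiaffine c (x ^ a * y ^ b) ≤ multiaffine c x ^ a * multiaffine c y ^ b := by
  have hxS (S : Finset ι) : 0 ≤ ∏ i ∈ S, x i := prod_nonneg fun i _ => hx i
  have hyS (S : Finset ι) : 0 ≤ ∏ i ∈ S, y i := prod_nonneg fun i _ => hy i
  have term_eq (S : Finset ι) : c S * ∏ i ∈ S, (x ^ a * y ^ b) i =
      (c S * ∏ i ∈ S, x i) ^ a * (c S * ∏ i ∈ S, y i) ^ b := by
    simp only [Pi.mul_apply, Pi.pow_apply, prod_mul_distrib]
    rw [Real.finsetProd_rpow _ _ fun i _ => hx i, Real.finsetProd_rpow _ _ fun i _ => hy i,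
      Real.mul_rpow (hc S) (hxS S), Real.mul_rpow (hc S) (hyS S), mul_mul_mul_comm,
      rpow_mul_rpow_of_add_eq_one (hc S) ha hb hab]
  calc multiaffine c (x ^ a * y ^ b)
      = ∑ S, (c S * ∏ i ∈ S, x i) ^ a * (c S * ∏ i ∈ S, y i) ^ b :=
        sum_congr rfl fun S _ => term_eq S
    _ ≤ multiaffine c x ^ a * multiaffine c y ^ b :=
        sum_rpow_mul_rpow_le univ ha hb hab (fun S _ => mul_nonneg (hc S) (hxS S))
          (fun S _ => mul_nonneg (hc S) (hyS S))

theorem exists_pos_multiaffine_smul_eq_mul {E : ℝ} (hc₀ : 0 < c ∅) (hE : multiaffine c x ≤ E) :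
    ∃ t : ℝ, 0 < t ∧ multiaffine c (t • x) = t * E := by
  have hcont : Continuous fun t : ℝ => multiaffine c (t • x) :=
    (continuous_multiaffine c).comp (by fun_prop)
  exact exists_pos_eq_mul_of_le hcont.continuousOn
    (by simpa only [zero_smul, multiaffine_zero] using hc₀) (by simpa only [one_smul] using hE)

theorem exists_mul_div_multiaffine_eq_rpow_mul_rpow {w : ι → ℝ} (hw : ∀ i, 0 ≤ w i)
    (hc : ∀ S, 0 ≤ c S) (hc₀ : 0 < c ∅) (hx : ∀ i, 0 < x i) (hy : ∀ i, 0 < y i)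
    (ha : 0 ≤ a) (hb : 0 ≤ b) (hab : a + b = 1) :
    ∃ z : ι → ℝ, (∀ i, 0 < z i) ∧ ∀ i, z i * w i / multiaffine c z =
      (x i * w i / multiaffine c x) ^ a * (y i * w i / multiaffine c y) ^ b := by
  have hx₀ (i : ι) : 0 ≤ x i := (hx i).le
  have hy₀ (i : ι) : 0 ≤ y i := (hy i).le
  obtain ⟨t, ht, htE⟩ := exists_pos_multiaffine_smul_eq_mul hc₀
    (multiaffine_rpow_mul_rpow_le hc hx₀ hy₀ ha hb hab)
  refine ⟨t • (x ^ a * y ^ b), fun i => ?_, fun i => ?_⟩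
  · exact mul_pos ht (mul_pos (Real.rpow_pos_of_pos (hx i) a) (Real.rpow_pos_of_pos (hy i) b))
  calc t * (x i ^ a * y i ^ b) * w i / multiaffine c (t • (x ^ a * y ^ b))
      = x i ^ a * y i ^ b * w i / (multiaffine c x ^ a * multiaffine c y ^ b) := by
        rw [htE, mul_assoc t, mul_div_mul_left _ _ ht.ne']
    _ = (x i * w i) ^ a * (y i * w i) ^ b / (multiaffine c x ^ a * multiaffine c y ^ b) := by
        rw [Real.mul_rpow (hx₀ i) (hw i), Real.mul_rpow (hy₀ i) (hw i), mul_mul_mul_comm,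
          rpow_mul_rpow_of_add_eq_one (hw i) ha hb hab]
    _ = (x i * w i / multiaffine c x) ^ a * (y i * w i / multiaffine c y) ^ b := by
        rw [Real.div_rpow (mul_nonneg (hx₀ i) (hw i)) (multiaffine_pos hc hc₀ hx₀).le,
          Real.div_rpow (mul_nonneg (hy₀ i) (hw i)) (multiaffine_pos hc hc₀ hy₀).le,
          div_mul_div_comm]

end Multiaffine

/-- The duration of a slot in terms of the number of stations that transmit in it: `σ` for an idle
slot, `Ts` for a success, `Tc` for a collision. -/
def slotDuration (σ Ts Tc : ℝ) : ℕ → ℝ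
  | 0 => σ
  | 1 => Ts
  | _ => Tc

theorem slotDuration_nonneg {σ Ts Tc : ℝ} (hσ : 0 ≤ σ) (hTs : 0 ≤ Ts) (hTc : 0 ≤ Tc) (m : ℕ) :
    0 ≤ slotDuration σ Ts Tc m := by
  unfold slotDuration
  split <;> assumption

theorem multiaffine_slotDuration_card {ι : Type*} [Fintype ι] (σ Ts Tc : ℝ) (x : ι → ℝ) :
    multiaffine (fun S => slotDuration σ Ts Tc #S) x =
      σ + Ts * ∑ i, x i + Tc * (∏ i, (1 + x i) - 1 - ∑ i, x i) := by
  have slotDuration_eq (m : ℕ) : slotDuration σ Ts Tc m =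
      Tc + (if m = 0 then σ - Tc else 0) + if m = 1 then Ts - Tc else 0 := by
    rcases m with _ | _ | m <;> simp [slotDuration]
  have sum_all : ∑ S : Finset ι, Tc * ∏ i ∈ S, x i = Tc * ∏ i, (1 + x i) := by
    rw [prod_one_add, powerset_univ, mul_sum]
  have sum_empty : ∑ S : Finset ι, (if #S = 0 then σ - Tc else 0) * ∏ i ∈ S, x i = σ - Tc := by
    simp only [ite_mul, zero_mul]
    rw [← sum_filter, univ_filter_card_eq, powersetCard_zero, sum_singleton, prod_empty, mul_one]
  have sum_singletons : ∑ S : Finset ι, (if #S = 1 then Ts - Tc else 0) * ∏ i ∈ S, x i =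
      (Ts - Tc) * ∑ i, x i := by
    simp only [ite_mul, zero_mul]
    rw [← sum_filter, univ_filter_card_eq, powersetCard_one, sum_map, mul_sum]
    simp only [Function.Embedding.coeFn_mk, prod_singleton]
  simp only [multiaffine, slotDuration_eq, add_mul, sum_add_distrib, sum_all, sum_empty,
    sum_singletons]
  ring

/-- The odds of an event of probability `p`, the coordinate in which the mean slot duration is a
polynomial; the junk value at `p = 1` is `0`. -/
noncomputable def odds (p : ℝ) : ℝ :=
  p / (1 - p)

theorem odds_pos {p : ℝ} (hp : p ∈ Set.Ioo 0 1) : 0 < odds p :=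
  div_pos hp.1 (sub_pos.2 hp.2)

theorem one_sub_mul_odds {p : ℝ} (hp : p ≠ 1) : (1 - p) * odds p = p :=
  mul_div_cancel₀ p (sub_ne_zero.2 hp.symm)

theorem exists_odds_eq {x : ℝ} (hx : 0 < x) : ∃ p ∈ Set.Ioo 0 1, odds p = x := by
  have hx₁ : 0 < 1 + x := by positivity
  refine ⟨x / (1 + x), ⟨by positivity, (div_lt_one hx₁).2 (by linarith)⟩, ?_⟩
  rw [odds, one_sub_div hx₁.ne', add_sub_cancel_right, div_div_div_cancel_right₀ hx₁.ne', div_one]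

section Throughput

variable {n : ℕ} {τ : Fin n → ℝ}

theorem mul_prod_erase_one_sub_eq (hτ : ∀ i, τ i ≠ 1) (i : Fin n) :
    τ i * ∏ k ∈ univ.erase i, (1 - τ k) = Pidle τ * odds (τ i) := by
  rw [Pidle, ← mul_prod_erase univ _ (mem_univ i), mul_right_comm, one_sub_mul_odds (hτ i)]

theorem Psucc_eq_Pidle_mul_sum_odds (hτ : ∀ i, τ i ≠ 1) :
    Psucc τ = Pidle τ * ∑ i, odds (τ i) := by
  simp only [Psucc, mul_prod_erase_one_sub_eq hτ, mul_sum]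

theorem Pidle_mul_prod_one_add_odds (hτ : ∀ i, τ i ≠ 1) :
    Pidle τ * ∏ i, (1 + odds (τ i)) = 1 := by
  rw [Pidle, ← prod_mul_distrib]
  refine prod_eq_one fun i _ => ?_
  rw [mul_one_add, one_sub_mul_odds (hτ i), sub_add_cancel]

theorem throughput_denominator_eq_Pidle_mul_multiaffine (σ Ts Tc : ℝ) (hτ : ∀ i, τ i ≠ 1) :
    σ * Pidle τ + Ts * Psucc τ + Tc * (1 - Pidle τ - Psucc τ) =
      Pidle τ * multiaffine (fun S => slotDuration σ Ts Tc #S) fun i => odds (τ i) := by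
  rw [multiaffine_slotDuration_card, Psucc_eq_Pidle_mul_sum_odds hτ]
  linear_combination -Tc * Pidle_mul_prod_one_add_odds hτ

theorem throughput_eq_odds_mul_div_multiaffine (σ Ts Tc : ℝ) (L : Fin n → ℝ) (hτ : ∀ i, τ i ≠ 1)
    (i : Fin n) :
    throughput σ Ts Tc L τ i =
      odds (τ i) * L i / multiaffine (fun S => slotDuration σ Ts Tc #S) fun k => odds (τ k) := by
  have hPidle : Pidle τ ≠ 0 := prod_ne_zero_iff.2 fun k _ => sub_ne_zero.2 (hτ k).symm
  rw [throughput, mul_prod_erase_one_sub_eq hτ,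
    throughput_denominator_eq_Pidle_mul_multiaffine σ Ts Tc hτ, mul_assoc,
    mul_div_mul_left _ _ hPidle]

theorem rate_region_log_convex_general {σ Ts Tc : ℝ} {L : Fin n → ℝ}
    (hσ : 0 < σ) (hTs : 0 ≤ Ts) (hTc : 0 ≤ Tc) (hL : ∀ i, 0 ≤ L i) {τ₁ τ₂ : Fin n → ℝ}
    (hτ₁ : ∀ i, τ₁ i ∈ Set.Ioo (0 : ℝ) 1) (hτ₂ : ∀ i, τ₂ i ∈ Set.Ioo (0 : ℝ) 1)
    {a b : ℝ} (ha : 0 ≤ a) (hb : 0 ≤ b) (hab : a + b = 1) :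
    ∃ τ' : Fin n → ℝ, (∀ i, τ' i ∈ Set.Ioo (0 : ℝ) 1) ∧
      ∀ i, throughput σ Ts Tc L τ' i =
        throughput σ Ts Tc L τ₁ i ^ a * throughput σ Ts Tc L τ₂ i ^ b := by
  have throughput_eq {τ : Fin n → ℝ} (hτ : ∀ i, τ i ∈ Set.Ioo (0 : ℝ) 1) :=
    throughput_eq_odds_mul_div_multiaffine σ Ts Tc L fun i => (hτ i).2.ne
  obtain ⟨z, hz, hzeq⟩ := exists_mul_div_multiaffine_eq_rpow_mul_rpow hL
    (fun S => slotDuration_nonneg hσ.le hTs hTc #S) hσ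
    (fun i => odds_pos (hτ₁ i)) (fun i => odds_pos (hτ₂ i)) ha hb hab
  choose τ' hτ' hodds using fun i => exists_odds_eq (hz i)
  refine ⟨τ', hτ', fun i => ?_⟩
  simp only [throughput_eq hτ', throughput_eq hτ₁, throughput_eq hτ₂, hodds, hzeq]

end Throughput

/-- the rate region `R(1)` of an 802.11 WLAN is log-convex. -/
theorem rate_region_log_convex (n : ℕ) (hn : 2 ≤ n)
    (σ Ts Tc : ℝ) (L : Fin n → ℝ)
    (hσ : 0 < σ) (hσTc : σ ≤ Tc) (hTc : 0 < Tc) (hTs : Tc ≤ Ts)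
    (hL : ∀ i, 0 < L i)
    (τ₁ τ₂ : Fin n → ℝ)
    (hτ₁ : ∀ i, τ₁ i ∈ Set.Ioo (0:ℝ) 1) (hτ₂ : ∀ i, τ₂ i ∈ Set.Ioo (0:ℝ) 1)
    (α : ℝ) (hα : α ∈ Set.Icc (0:ℝ) 1) :
    ∃ τ' : Fin n → ℝ, (∀ i, τ' i ∈ Set.Ioo (0:ℝ) 1) ∧
      ∀ i, throughput σ Ts Tc L τ' i =
        (throughput σ Ts Tc L τ₁ i) ^ α * (throughput σ Ts Tc L τ₂ i) ^ (1 - α) := by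
  exact rate_region_log_convex_general hσ (hTc.le.trans hTs) hTc.le (fun i => (hL i).le) hτ₁ hτ₂
    hα.1 (sub_nonneg.2 hα.2) (add_sub_cancel α 1)
end

section
/- Change-of-variables form of the main theorem: let n ≥ 2, a > 0 and K ≥ 0, and define X(x) = a + K·∑_{i=1}^n x_i + ∏_{i=1}^n (1+x_i) − 1 for x ∈ [0,∞)^n. Then for every x¹, x² ∈ (0,∞)^n and every α ∈ [0,1], there exists x* ∈ (0,∞)^n such that for every i ∈ {1,…,n}, x*_i / X(x*) = (x¹_i / X(x¹))^α · (x²_i / X(x²))^{1−α}. -/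
open Finset

/-- Normalized mean MAC slot duration `X(x) = a + K·∑ xᵢ + ∏(1+xᵢ) − 1`. -/
noncomputable def Xfun {n : ℕ} (a K : ℝ) (x : Fin n → ℝ) : ℝ :=
  a + K * ∑ i, x i + ∏ i, (1 + x i) - 1

/-!
Write `r` for the weighted geometric mean of the two throughput vectors. A point `t • r` has
throughput `r` as soon as `X (t • r) = t`. The map `t ↦ X (t • r)` is positive at `0`. At
`T = X(x₁) ^ α * X(x₂) ^ (1 - α)` it is at most `T`: there `T • r` is the geometric mean of `x₁`
and `x₂`, and `X` is a posynomial, so Hölder's inequality bounds its value at a geometric mean by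
the geometric mean of its values. The intermediate value theorem gives a fixed point in `(0, T]`.
-/

theorem sum_rpow_mul_rpow_one_sub_le {ι : Type*} (s : Finset ι) {u v : ι → ℝ}
    (hu : ∀ i ∈ s, 0 ≤ u i) (hv : ∀ i ∈ s, 0 ≤ v i) {α : ℝ} (hα : α ∈ Set.Icc 0 1) :
    ∑ i ∈ s, u i ^ α * v i ^ (1 - α) ≤ (∑ i ∈ s, u i) ^ α * (∑ i ∈ s, v i) ^ (1 - α) := by
  rcases hα.1.eq_or_lt with rfl | hα₀
  · simp
  rcases hα.2.eq_or_lt with rfl | hα₁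
  · simp
  have hα₁' : 1 - α ≠ 0 := (sub_pos.2 hα₁).ne'
  have holder := Real.inner_le_Lp_mul_Lq_of_nonneg s
    (Real.HolderConjugate.inv_one_sub_inv hα₀ hα₁)
    (fun i hi => Real.rpow_nonneg (hu i hi) α) (fun i hi => Real.rpow_nonneg (hv i hi) (1 - α))
  rwa [one_div, one_div, inv_inv, inv_inv,
    sum_congr rfl fun i hi => Real.rpow_rpow_inv (hu i hi) hα₀.ne',
    sum_congr rfl fun i hi => Real.rpow_rpow_inv (hv i hi) hα₁'] at holder

section GeometricallyConvex

variable {ι : Type*}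

/-- Geometric (multiplicative) convexity of `f` on the open positive orthant: the value at a
weighted geometric mean is at most the weighted geometric mean of the values. For positive `f` this
is convexity of `log ∘ f ∘ exp`. The powers and the product of vectors are taken coordinatewise. -/
def GeometricallyConvex (f : (ι → ℝ) → ℝ) : Prop :=
  ∀ ⦃x y : ι → ℝ⦄, (∀ i, 0 < x i) → (∀ i, 0 < y i) → ∀ ⦃α : ℝ⦄, α ∈ Set.Icc 0 1 →
    f (x ^ α * y ^ (1 - α)) ≤ f x ^ α * f y ^ (1 - α)

theorem geometricallyConvex_const_mul_prod {c : ℝ} (hc : 0 ≤ c) (s : Finset ι) :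
    GeometricallyConvex fun x => c * ∏ i ∈ s, x i := by
  intro x y hx hy α _
  have prod_nonneg_of_pos {z : ι → ℝ} (hz : ∀ i, 0 < z i) : 0 ≤ ∏ i ∈ s, z i :=
    prod_nonneg fun i _ => (hz i).le
  have const_eq : c ^ α * c ^ (1 - α) = c := by
    rw [← Real.rpow_add' hc (by simp), add_sub_cancel, Real.rpow_one]
  have prod_eq : ∏ i ∈ s, (x ^ α * y ^ (1 - α)) i =
      (∏ i ∈ s, x i) ^ α * (∏ i ∈ s, y i) ^ (1 - α) := by
    simp only [Pi.mul_apply, Pi.pow_apply, prod_mul_distrib,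
      Real.finsetProd_rpow _ _ fun i _ => (hx i).le, Real.finsetProd_rpow _ _ fun i _ => (hy i).le]
  beta_reduce
  rw [prod_eq, Real.mul_rpow hc (prod_nonneg_of_pos hx), Real.mul_rpow hc (prod_nonneg_of_pos hy),
    mul_mul_mul_comm, const_eq]

theorem GeometricallyConvex.sum {κ : Type*} {s : Finset κ} {f : κ → (ι → ℝ) → ℝ}
    (hf : ∀ j ∈ s, GeometricallyConvex (f j))
    (hf₀ : ∀ j ∈ s, ∀ x : ι → ℝ, (∀ i, 0 < x i) → 0 ≤ f j x) :
    GeometricallyConvex fun x => ∑ j ∈ s, f j x := fun x y hx hy α hα =>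
  calc
    ∑ j ∈ s, f j (x ^ α * y ^ (1 - α)) ≤ ∑ j ∈ s, f j x ^ α * f j y ^ (1 - α) :=
      sum_le_sum fun j hj => hf j hj hx hy hα
    _ ≤ (∑ j ∈ s, f j x) ^ α * (∑ j ∈ s, f j y) ^ (1 - α) :=
      sum_rpow_mul_rpow_one_sub_le s (fun j hj => hf₀ j hj x hx) (fun j hj => hf₀ j hj y hy) hα

theorem exists_pos_apply_smul_eq {f : (ι → ℝ) → ℝ} (hcont : ContinuousOn f (Set.Ici 0))
    (hzero : 0 < f 0) {r : ι → ℝ} (hr : 0 ≤ r) {T : ℝ} (hT : 0 ≤ T) (hle : f (T • r) ≤ T) :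
    ∃ t : ℝ, 0 < t ∧ f (t • r) = t := by
  have hray : ContinuousOn (fun t : ℝ => f (t • r)) (Set.Icc 0 T) :=
    hcont.comp (by fun_prop) fun t ht => smul_nonneg ht.1 hr
  obtain ⟨t, ht, hfix⟩ :=
    exists_mem_Icc_isFixedPt hray hT (by simpa only [zero_smul] using hzero.le) hle
  refine ⟨t, ht.1.lt_of_ne ?_, hfix⟩
  rintro rfl
  exact hzero.ne' (by simpa only [Function.IsFixedPt, zero_smul] using hfix)

theorem GeometricallyConvex.exists_div_eq_rpow_mul_rpow {f : (ι → ℝ) → ℝ}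
    (hf : GeometricallyConvex f) (hcont : ContinuousOn f (Set.Ici 0))
    (hpos : ∀ x, 0 ≤ x → 0 < f x) {x y : ι → ℝ} (hx : ∀ i, 0 < x i) (hy : ∀ i, 0 < y i)
    {α : ℝ} (hα : α ∈ Set.Icc 0 1) :
    ∃ z : ι → ℝ, (∀ i, 0 < z i) ∧
      ∀ i, z i / f z = (x i / f x) ^ α * (y i / f y) ^ (1 - α) := by
  have hfx : 0 < f x := hpos x fun i => (hx i).le
  have hfy : 0 < f y := hpos y fun i => (hy i).le
  let r : ι → ℝ := fun i => (x i / f x) ^ α * (y i / f y) ^ (1 - α)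
  let T : ℝ := f x ^ α * f y ^ (1 - α)
  have hr : ∀ i, 0 < r i := fun i =>
    mul_pos (Real.rpow_pos_of_pos (div_pos (hx i) hfx) α)
      (Real.rpow_pos_of_pos (div_pos (hy i) hfy) (1 - α))
  have hT : 0 < T := mul_pos (Real.rpow_pos_of_pos hfx α) (Real.rpow_pos_of_pos hfy (1 - α))
  have smul_eq : T • r = x ^ α * y ^ (1 - α) := by
    funext i
    simp only [T, r, Pi.smul_apply, Pi.mul_apply, Pi.pow_apply, smul_eq_mul,
      Real.div_rpow (hx i).le hfx.le, Real.div_rpow (hy i).le hfy.le]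
    field_simp
  obtain ⟨t, ht, hfix⟩ := exists_pos_apply_smul_eq hcont (hpos 0 le_rfl) (fun i => (hr i).le)
    hT.le (smul_eq ▸ hf hx hy hα)
  refine ⟨t • r, fun i => mul_pos ht (hr i), fun i => ?_⟩
  rw [hfix]
  exact mul_div_cancel_left₀ (r i) ht.ne'

end GeometricallyConvex

section Xfun

variable {n : ℕ} {a K : ℝ}

/-- The coefficient of `∏ i ∈ s, x i` in the expansion of `X(x)` into square-free monomials.
Absorbing `K · ∑ xᵢ` into the linear monomials keeps all coefficients nonnegative for `a ≥ 0` and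
`K ≥ -1`. -/
noncomputable def slotCoeff {ι : Type*} (a K : ℝ) (s : Finset ι) : ℝ :=
  if #s = 0 then a else if #s = 1 then 1 + K else 1

theorem slotCoeff_nonneg {ι : Type*} (ha : 0 ≤ a) (hK : -1 ≤ K) (s : Finset ι) :
    0 ≤ slotCoeff a K s := by
  unfold slotCoeff
  split_ifs <;> linarith

theorem Xfun_eq_sum_slotCoeff_mul_prod (a K : ℝ) (x : Fin n → ℝ) :
    Xfun a K x = ∑ s, slotCoeff a K s * ∏ i ∈ s, x i := by
  have term_eq (s : Finset (Fin n)) : slotCoeff a K s * ∏ i ∈ s, x i =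
      (if s = ∅ then a - 1 else 0) + (if #s = 1 then K * ∏ i ∈ s, x i else 0) +
        ∏ i ∈ s, x i := by
    rcases s.eq_empty_or_nonempty with rfl | hs
    · simp [slotCoeff]
    · simp only [slotCoeff, card_eq_zero, hs.ne_empty, if_false]
      split_ifs <;> ring
  have sum_singletons : ∑ s : Finset (Fin n), (if #s = 1 then K * ∏ i ∈ s, x i else 0) =
      K * ∑ i, x i := by
    rw [← sum_filter, ← powerset_univ, ← powersetCard_eq_filter, powersetCard_one, sum_map,
      mul_sum]
    simp
  have sum_all : ∑ s : Finset (Fin n), ∏ i ∈ s, x i = ∏ i, (1 + x i) := by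
    rw [prod_one_add, powerset_univ]
  simp only [term_eq, sum_add_distrib, sum_singletons, sum_all, sum_ite_eq', mem_univ, if_true,
    Xfun]
  ring

theorem continuous_Xfun : Continuous (Xfun a K : (Fin n → ℝ) → ℝ) := by
  unfold Xfun
  fun_prop

theorem Xfun_pos (ha : 0 < a) (hK : -1 ≤ K) {x : Fin n → ℝ} (hx : 0 ≤ x) : 0 < Xfun a K x := by
  rw [Xfun_eq_sum_slotCoeff_mul_prod]
  refine sum_pos' (fun s _ => ?_) ⟨∅, mem_univ _, by simpa [slotCoeff] using ha⟩
  exact mul_nonneg (slotCoeff_nonneg ha.le hK s) (prod_nonneg fun i _ => hx i)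

theorem geometricallyConvex_Xfun (ha : 0 ≤ a) (hK : -1 ≤ K) :
    GeometricallyConvex (Xfun a K : (Fin n → ℝ) → ℝ) := by
  rw [funext (Xfun_eq_sum_slotCoeff_mul_prod a K)]
  refine .sum (fun s _ => ?_) fun s _ x hx => ?_
  · exact geometricallyConvex_const_mul_prod (slotCoeff_nonneg ha hK s) s
  · exact mul_nonneg (slotCoeff_nonneg ha hK s) (prod_nonneg fun i _ => (hx i).le)

end Xfun

theorem log_convex_change_of_variables_general {n : ℕ} {a K : ℝ} (ha : 0 < a) (hK : -1 ≤ K)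
    {x₁ x₂ : Fin n → ℝ} (hx₁ : ∀ i, 0 < x₁ i) (hx₂ : ∀ i, 0 < x₂ i)
    {α : ℝ} (hα : α ∈ Set.Icc 0 1) :
    ∃ x' : Fin n → ℝ, (∀ i, 0 < x' i) ∧
      ∀ i, x' i / Xfun a K x' =
        (x₁ i / Xfun a K x₁) ^ α * (x₂ i / Xfun a K x₂) ^ (1 - α) :=
  (geometricallyConvex_Xfun ha.le hK).exists_div_eq_rpow_mul_rpow
    continuous_Xfun.continuousOn (fun _ => Xfun_pos ha hK) hx₁ hx₂ hα

/-- change-of-variables form of log-convexity of the rate region. -/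
theorem log_convex_change_of_variables (n : ℕ) (hn : 2 ≤ n)
    (a K : ℝ) (ha : 0 < a) (hK : 0 ≤ K)
    (x₁ x₂ : Fin n → ℝ) (hx₁ : ∀ i, 0 < x₁ i) (hx₂ : ∀ i, 0 < x₂ i)
    (α : ℝ) (hα : α ∈ Set.Icc (0:ℝ) 1) :
    ∃ x' : Fin n → ℝ, (∀ i, 0 < x' i) ∧
      ∀ i, x' i / Xfun a K x' =
        (x₁ i / Xfun a K x₁) ^ α * (x₂ i / Xfun a K x₂) ^ (1 - α) :=
  log_convex_change_of_variables_general ha (by linarith) hx₁ hx₂ hα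
end

section
/- Hölder lower bound: let n ≥ 1, a ≥ 0, K ≥ 0, and define X(x) = a + K·∑_{i=1}^n x_i + ∏_{i=1}^n (1+x_i) − 1. For every x¹, x² ∈ [0,∞)^n and every α ∈ [0,1], setting y_i = (x¹_i)^α (x²_i)^{1−α}, one has X(x¹)^α · X(x²)^{1−α} ≥ X(y) = a + K·∑_{i=1}^n y_i + ∏_{i=1}^n (1+y_i) − 1. -/
open Finset

/-!
Subtracting `1` from `∏ (1 + xᵢ)` removes the empty subset from its expansion, so `X` is built from
constants and coordinates with sums, products and nonnegative coefficients only. The inequality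
holds, with equality, for constants and coordinates; it survives products because `t ↦ t ^ α` is
multiplicative, and sums by Hölder's inequality.
-/

theorem sum_rpow_mul_rpow_le_of_add_eq_one {ι : Type*} (s : Finset ι) {u v : ι → ℝ}
    (hu : ∀ i ∈ s, 0 ≤ u i) (hv : ∀ i ∈ s, 0 ≤ v i)
    {α β : ℝ} (hα : 0 ≤ α) (hβ : 0 ≤ β) (hαβ : α + β = 1) :
    ∑ i ∈ s, u i ^ α * v i ^ β ≤ (∑ i ∈ s, u i) ^ α * (∑ i ∈ s, v i) ^ β := by
  rcases hα.eq_or_lt with rfl | hα_pos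
  · obtain rfl : β = 1 := by simpa using hαβ
    simp
  rcases hβ.eq_or_lt with rfl | hβ_pos
  · obtain rfl : α = 1 := by simpa using hαβ
    simp
  have hconj : Real.HolderConjugate α⁻¹ β⁻¹ := .inv_inv hα_pos hβ_pos hαβ
  have hu_cancel : ∑ i ∈ s, (u i ^ α) ^ α⁻¹ = ∑ i ∈ s, u i :=
    sum_congr rfl fun i hi ↦ Real.rpow_rpow_inv (hu i hi) hα_pos.ne'
  have hv_cancel : ∑ i ∈ s, (v i ^ β) ^ β⁻¹ = ∑ i ∈ s, v i :=
    sum_congr rfl fun i hi ↦ Real.rpow_rpow_inv (hv i hi) hβ_pos.ne'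
  simpa only [hu_cancel, hv_cancel, one_div, inv_inv] using
    Real.inner_le_Lp_mul_Lq_of_nonneg s hconj
      (fun i hi ↦ Real.rpow_nonneg (hu i hi) α) (fun i hi ↦ Real.rpow_nonneg (hv i hi) β)

theorem prod_one_add_sub_one_eq_sum_powerset {ι R : Type*} [DecidableEq ι] [CommRing R]
    (s : Finset ι) (f : ι → R) :
    ∏ i ∈ s, (1 + f i) - 1 = ∑ t ∈ s.powerset.erase ∅, ∏ i ∈ t, f i := by
  rw [prod_one_add, sum_erase_eq_sub (empty_mem_powerset s), prod_empty]

/-- Multiplicative (geometric) convexity on the closed nonnegative orthant: `f` is nonnegative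
there, and its value at a coordinatewise weighted geometric mean of two points is at most the
geometric mean of its values with the same weights. Nonnegativity is included so that the notion is
closed under products. -/
structure GeomConvex {ι : Type*} (f : (ι → ℝ) → ℝ) : Prop where
  nonneg : ∀ ⦃x : ι → ℝ⦄, 0 ≤ x → 0 ≤ f x
  map_geom_mean_le : ∀ ⦃x y : ι → ℝ⦄, 0 ≤ x → 0 ≤ y →
    ∀ ⦃α β : ℝ⦄, 0 ≤ α → 0 ≤ β → α + β = 1 →
      f (fun i ↦ x i ^ α * y i ^ β) ≤ f x ^ α * f y ^ β

namespace GeomConvex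

variable {ι κ : Type*} {f g : (ι → ℝ) → ℝ}

theorem const {c : ℝ} (hc : 0 ≤ c) : GeomConvex fun _ : ι → ℝ ↦ c where
  nonneg _ _ := hc
  map_geom_mean_le _ _ _ _ α β hα hβ hαβ := by
    rw [← Real.rpow_add_of_nonneg hc hα hβ, hαβ, Real.rpow_one]

theorem coord (i : ι) : GeomConvex fun x : ι → ℝ ↦ x i where
  nonneg _ hx := hx i
  map_geom_mean_le _ _ _ _ _ _ _ _ _ := le_rfl

theorem mul (hf : GeomConvex f) (hg : GeomConvex g) : GeomConvex fun x ↦ f x * g x where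
  nonneg _ hx := mul_nonneg (hf.nonneg hx) (hg.nonneg hx)
  map_geom_mean_le x y hx hy α β hα hβ hαβ := by
    have hmean : 0 ≤ fun i ↦ x i ^ α * y i ^ β := fun i ↦
      mul_nonneg (Real.rpow_nonneg (hx i) α) (Real.rpow_nonneg (hy i) β)
    have hfxy : 0 ≤ f x ^ α * f y ^ β :=
      mul_nonneg (Real.rpow_nonneg (hf.nonneg hx) α) (Real.rpow_nonneg (hf.nonneg hy) β)
    calc f (fun i ↦ x i ^ α * y i ^ β) * g (fun i ↦ x i ^ α * y i ^ β)
        ≤ (f x ^ α * f y ^ β) * (g x ^ α * g y ^ β) :=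
          mul_le_mul (hf.map_geom_mean_le hx hy hα hβ hαβ)
            (hg.map_geom_mean_le hx hy hα hβ hαβ) (hg.nonneg hmean) hfxy
      _ = (f x * g x) ^ α * (f y * g y) ^ β := by
          rw [Real.mul_rpow (hf.nonneg hx) (hg.nonneg hx),
            Real.mul_rpow (hf.nonneg hy) (hg.nonneg hy), mul_mul_mul_comm]

theorem sum {F : κ → (ι → ℝ) → ℝ} {s : Finset κ} (hF : ∀ k ∈ s, GeomConvex (F k)) :
    GeomConvex fun x ↦ ∑ k ∈ s, F k x where
  nonneg _ hx := sum_nonneg fun k hk ↦ (hF k hk).nonneg hx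
  map_geom_mean_le x y hx hy α β hα hβ hαβ :=
    calc ∑ k ∈ s, F k (fun i ↦ x i ^ α * y i ^ β)
        ≤ ∑ k ∈ s, F k x ^ α * F k y ^ β :=
          sum_le_sum fun k hk ↦ (hF k hk).map_geom_mean_le hx hy hα hβ hαβ
      _ ≤ (∑ k ∈ s, F k x) ^ α * (∑ k ∈ s, F k y) ^ β :=
          sum_rpow_mul_rpow_le_of_add_eq_one s (fun k hk ↦ (hF k hk).nonneg hx)
            (fun k hk ↦ (hF k hk).nonneg hy) hα hβ hαβ

theorem add (hf : GeomConvex f) (hg : GeomConvex g) : GeomConvex fun x ↦ f x + g x := by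
  have hfg : ∀ k ∈ univ, GeomConvex (![f, g] k) := by
    simpa [Fin.forall_fin_two] using And.intro hf hg
  simpa [Fin.sum_univ_two] using sum hfg

theorem prod {F : κ → (ι → ℝ) → ℝ} {s : Finset κ} (hF : ∀ k ∈ s, GeomConvex (F k)) :
    GeomConvex fun x ↦ ∏ k ∈ s, F k x := by
  simpa only [← prod_apply] using
    prod_induction F GeomConvex (fun _ _ ↦ mul) (const zero_le_one) hF

theorem prod_one_add_sub_one (s : Finset ι) :
    GeomConvex fun x ↦ ∏ i ∈ s, (1 + x i) - 1 := by
  classical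
  simpa only [prod_one_add_sub_one_eq_sum_powerset] using sum fun t _ ↦ prod fun i _ ↦ coord i

end GeomConvex

theorem geomConvex_Xfun {n : ℕ} {a K : ℝ} (ha : 0 ≤ a) (hK : 0 ≤ K) :
    GeomConvex (Xfun a K : (Fin n → ℝ) → ℝ) := by
  have hlinear : GeomConvex fun x : Fin n → ℝ ↦ K * ∑ i, x i :=
    (GeomConvex.const hK).mul (.sum fun i _ ↦ .coord i)
  have hsum := ((GeomConvex.const ha).add hlinear).add (.prod_one_add_sub_one univ)
  unfold Xfun
  simpa only [← add_sub_assoc] using hsum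

/-- Hölder lower bound `X(x¹)^α · X(x²)^{1−α} ≥ X(y)` where
`yᵢ = (x¹ᵢ)^α (x²ᵢ)^{1−α}`. -/
theorem Xfun_holder_lower_bound (n : ℕ) (hn : 1 ≤ n)
    (a K : ℝ) (ha : 0 ≤ a) (hK : 0 ≤ K)
    (x₁ x₂ : Fin n → ℝ) (hx₁ : ∀ i, 0 ≤ x₁ i) (hx₂ : ∀ i, 0 ≤ x₂ i)
    (α : ℝ) (hα : α ∈ Set.Icc (0:ℝ) 1)
    (y : Fin n → ℝ) (hy : ∀ i, y i = (x₁ i) ^ α * (x₂ i) ^ (1 - α)) :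
    Xfun a K y ≤ (Xfun a K x₁) ^ α * (Xfun a K x₂) ^ (1 - α) := by
  obtain rfl : y = fun i ↦ x₁ i ^ α * x₂ i ^ (1 - α) := funext hy
  exact (geomConvex_Xfun ha hK).map_geom_mean_le hx₁ hx₂ hα.1 (sub_nonneg.2 hα.2)
    (add_sub_cancel α 1)
end

section
/- Strict convexity of the defining function: let n ≥ 2, a ≥ 0, K ≥ 0 and y ∈ [0,∞)^n, and suppose there exist at least two indices i ≠ j with y_i > 0 and y_j > 0. Then the function g(δ) = δ·( a + K·∑_{i=1}^n y_i/δ + ∏_{i=1}^n (1 + y_i/δ) − 1 ) is strictly convex on (0,∞). -/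
open Finset

/-- The function `g(δ) = δ·( a + K·∑ yᵢ/δ + ∏(1 + yᵢ/δ) − 1 )`. -/
noncomputable def gfun {n : ℕ} (a K : ℝ) (y : Fin n → ℝ) (δ : ℝ) : ℝ :=
  δ * (a + K * ∑ i, y i / δ + ∏ i, (1 + y i / δ) - 1)

/-!
Expanding the product over subsets `t` of the index set gives
`g(δ) = (a - 1) δ + K ∑ yᵢ + ∑ₜ (∏_{i ∈ t} yᵢ) δ ^ (1 - |t|)`.
The first two terms are affine, every power of `δ` is convex on `(0, ∞)`, and the term of
`t = {i, j}` is `yᵢ yⱼ δ⁻¹`, which is strictly convex.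
-/

section ConvexFunctions

variable {𝕜 E β ι : Type*} [PartialOrder 𝕜] [AddCommMonoid E] [AddCommMonoid β] [PartialOrder β]

theorem strictConvexOn_const_smul [CommSemiring 𝕜] [SMul 𝕜 E] [Module 𝕜 β] [PosSMulStrictMono 𝕜 β]
    {s : Set E} {f : E → β} {c : 𝕜} (hc : 0 < c) (hf : StrictConvexOn 𝕜 s f) :
    StrictConvexOn 𝕜 s fun x => c • f x :=
  ⟨hf.1, fun x hx y hy hxy a b ha hb hab =>
    calc
      c • f (a • x + b • y) < c • (a • f x + b • f y) :=
        smul_lt_smul_of_pos_left (hf.2 hx hy hxy ha hb hab) hc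
      _ = a • c • f x + b • c • f y := by rw [smul_add, smul_comm c, smul_comm c]⟩

theorem strictConvexOn_sum [Semiring 𝕜] [IsOrderedCancelAddMonoid β] [SMul 𝕜 E]
    [DistribMulAction 𝕜 β] {s : Set E} {t : Finset ι} {f : ι → E → β}
    (hf : ∀ i ∈ t, ConvexOn 𝕜 s (f i)) (hstrict : ∃ i ∈ t, StrictConvexOn 𝕜 s (f i)) :
    StrictConvexOn 𝕜 s fun x => ∑ i ∈ t, f i x := by
  obtain ⟨k, hkt, hk⟩ := hstrict
  refine ⟨hk.1, fun x hx y hy hxy a b ha hb hab => ?_⟩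
  calc
    ∑ i ∈ t, f i (a • x + b • y) < ∑ i ∈ t, (a • f i x + b • f i y) :=
      sum_lt_sum (fun i hi => (hf i hi).2 hx hy ha.le hb.le hab)
        ⟨k, hkt, hk.2 hx hy hxy ha hb hab⟩
    _ = a • ∑ i ∈ t, f i x + b • ∑ i ∈ t, f i y := by
      rw [sum_add_distrib, smul_sum, smul_sum]

end ConvexFunctions

theorem mul_prod_one_add_div {ι F : Type*} [Field F] (s : Finset ι) (y : ι → F) {δ : F}
    (hδ : δ ≠ 0) :
    δ * ∏ i ∈ s, (1 + y i / δ) = ∑ t ∈ s.powerset, (∏ i ∈ t, y i) * δ ^ (1 - #t : ℤ) := by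
  rw [prod_one_add, mul_sum]
  refine sum_congr rfl fun t _ => ?_
  rw [prod_div_distrib, prod_const, zpow_sub₀ hδ, zpow_one, zpow_natCast, mul_div_left_comm]

theorem strictConvexOn_mul_prod_one_add_div {ι : Type*} {s : Finset ι} {y : ι → ℝ}
    (hy : ∀ i ∈ s, 0 ≤ y i) {i j : ι} (hi : i ∈ s) (hj : j ∈ s) (hij : i ≠ j)
    (hyi : 0 < y i) (hyj : 0 < y j) :
    StrictConvexOn ℝ (Set.Ioi 0) fun δ : ℝ => δ * ∏ k ∈ s, (1 + y k / δ) := by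
  classical
  have convexOn_term : ∀ t ∈ s.powerset,
      ConvexOn ℝ (Set.Ioi 0) fun δ : ℝ => (∏ k ∈ t, y k) * δ ^ (1 - #t : ℤ) := fun t ht =>
    (convexOn_zpow _).smul (prod_nonneg fun k hk => hy k (mem_powerset.1 ht hk))
  have strictConvexOn_pair :
      StrictConvexOn ℝ (Set.Ioi 0) fun δ : ℝ => (∏ k ∈ {i, j}, y k) * δ ^ (1 - #{i, j} : ℤ) := by
    rw [prod_pair hij, card_pair hij]
    exact strictConvexOn_const_smul (mul_pos hyi hyj)
      (strictConvexOn_zpow (by norm_num) (by norm_num))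
  have pair_mem : {i, j} ∈ s.powerset :=
    mem_powerset.2 (insert_subset hi (singleton_subset_iff.2 hj))
  exact (strictConvexOn_sum convexOn_term ⟨{i, j}, pair_mem, strictConvexOn_pair⟩).congr
    fun δ hδ => (mul_prod_one_add_div s y (ne_of_gt hδ)).symm

theorem gfun_eq_mul_prod_add_affine {n : ℕ} (a K : ℝ) (y : Fin n → ℝ) {δ : ℝ} (hδ : δ ≠ 0) :
    gfun a K y δ = δ * ∏ i, (1 + y i / δ) + ((a - 1) * δ + K * ∑ i, y i) := by
  rw [gfun, ← sum_div]
  field_simp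
  ring

theorem gfun_strictConvexOn_general {n : ℕ} (a K : ℝ) {y : Fin n → ℝ} (hy : ∀ i, 0 ≤ y i)
    {i j : Fin n} (hij : i ≠ j) (hyi : 0 < y i) (hyj : 0 < y j) :
    StrictConvexOn ℝ (Set.Ioi (0:ℝ)) (gfun a K y) := by
  have strictConvexOn_prod : StrictConvexOn ℝ (Set.Ioi 0) fun δ : ℝ => δ * ∏ k, (1 + y k / δ) :=
    strictConvexOn_mul_prod_one_add_div (fun k _ => hy k) (mem_univ i) (mem_univ j) hij hyi hyj
  have convexOn_affine : ConvexOn ℝ (Set.Ioi 0) fun δ : ℝ => (a - 1) * δ + K * ∑ k, y k :=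
    ((LinearMap.mulLeft ℝ (a - 1)).convexOn (convex_Ioi 0)).add_const _
  exact (strictConvexOn_prod.add_convexOn convexOn_affine).congr
    fun δ hδ => (gfun_eq_mul_prod_add_affine a K y (ne_of_gt hδ)).symm

/-- `g` is strictly convex on `(0,∞)` whenever at least two
components of `y` are strictly positive. -/
theorem gfun_strictConvexOn (n : ℕ) (hn : 2 ≤ n)
    (a K : ℝ) (ha : 0 ≤ a) (hK : 0 ≤ K)
    (y : Fin n → ℝ) (hy : ∀ i, 0 ≤ y i)
    (i j : Fin n) (hij : i ≠ j) (hyi : 0 < y i) (hyj : 0 < y j) :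
    StrictConvexOn ℝ (Set.Ioi (0:ℝ)) (gfun a K y) :=
  gfun_strictConvexOn_general a K hy hij hyi hyj
end

section
/- Second-derivative formula: let n ≥ 2, a ≥ 0, K ≥ 0 and y ∈ [0,∞)^n, and let g(δ) = δ·( a + K·∑_{i=1}^n y_i/δ + ∏_{i=1}^n (1 + y_i/δ) − 1 ). Then g is twice differentiable on (0,∞), and for every δ > 0, g''(δ) = δ^{−3} · ∑_{i≠j} y_i y_j ∏_{k ≠ i, k ≠ j} (1 + y_k/δ), where the sum is over ordered pairs of distinct indices i, j ∈ {1,…,n} and a product over an empty index set equals 1. -/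
open Finset

/-!
The function has the form `g(δ) = δ * f(δ⁻¹)` with `f(u) = a + K ∑ yᵢ u + ∏ (1 + yᵢ u) - 1`. For
any twice differentiable `f`, `g'(δ) = f(δ⁻¹) - δ⁻¹ f'(δ⁻¹)`; on differentiating once more the two
terms containing `f'` cancel, leaving `g''(δ) = δ⁻³ f''(δ⁻¹)`. Since `f` is a product of affine
functions plus an affine function, Leibniz' rule gives `f''` as a sum over ordered pairs of distinct
factors.
-/

open scoped Topology

section Inversion

variable {𝕜 E : Type*} [NontriviallyNormedField 𝕜] [NormedAddCommGroup E] [NormedSpace 𝕜 E]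

lemma hasDerivAt_comp_inv {f : 𝕜 → E} {f' : E} {x : 𝕜} (hx : x ≠ 0)
    (hf : HasDerivAt f f' x⁻¹) :
    HasDerivAt (fun t ↦ f t⁻¹) (-x⁻¹ ^ 2 • f') x := by
  simpa only [inv_pow] using! hf.scomp x (hasDerivAt_inv hx)

lemma hasDerivAt_smul_comp_inv {f : 𝕜 → E} {f' : E} {x : 𝕜} (hx : x ≠ 0)
    (hf : HasDerivAt f f' x⁻¹) :
    HasDerivAt (fun t ↦ t • f t⁻¹) (f x⁻¹ - x⁻¹ • f') x := by
  refine ((hasDerivAt_id' x).fun_smul (hasDerivAt_comp_inv hx hf)).congr_deriv ?_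
  match_scalars <;> field_simp

lemma hasDerivAt_deriv_smul_comp_inv {f f' : 𝕜 → E} {f'' : E} {x : 𝕜} (hx : x ≠ 0)
    (hf : ∀ᶠ u in 𝓝 x⁻¹, HasDerivAt f (f' u) u) (hf' : HasDerivAt f' f'' x⁻¹) :
    HasDerivAt (deriv fun t ↦ t • f t⁻¹) (x⁻¹ ^ 3 • f'') x := by
  have deriv_eq : (deriv fun t ↦ t • f t⁻¹) =ᶠ[𝓝 x] fun t ↦ f t⁻¹ - t⁻¹ • f' t⁻¹ := by
    filter_upwards [(tendsto_inv₀ hx).eventually hf, eventually_ne_nhds hx] with t hft ht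
    exact (hasDerivAt_smul_comp_inv ht hft).deriv
  refine HasDerivAt.congr_of_eventuallyEq ?_ deriv_eq
  refine ((hasDerivAt_comp_inv hx hf.self_of_nhds).fun_sub
    ((hasDerivAt_inv hx).fun_smul (hasDerivAt_comp_inv hx hf'))).congr_deriv ?_
  match_scalars <;> field_simp
  ring

end Inversion

section ProductOfAffine

variable {𝕜 ι : Type*} [NontriviallyNormedField 𝕜] [DecidableEq ι]

lemma hasDerivAt_prod_one_add_mul (s : Finset ι) (y : ι → 𝕜) (u : 𝕜) :
    HasDerivAt (fun v ↦ ∏ i ∈ s, (1 + y i * v))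
      (∑ i ∈ s, y i * ∏ j ∈ s.erase i, (1 + y j * u)) u := by
  have hasDerivAt_factor (i : ι) : HasDerivAt (fun v ↦ 1 + y i * v) (y i) u := by
    simpa only [mul_one] using ((hasDerivAt_id' u).const_mul (y i)).const_add 1
  simpa only [smul_eq_mul, mul_comm] using
    HasDerivAt.fun_finsetProd fun i (_ : i ∈ s) ↦ hasDerivAt_factor i

lemma hasDerivAt_sum_mul_prod_erase_one_add_mul (s : Finset ι) (y : ι → 𝕜) (u : 𝕜) :
    HasDerivAt (fun v ↦ ∑ i ∈ s, y i * ∏ j ∈ s.erase i, (1 + y j * v))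
      (∑ i ∈ s, ∑ j ∈ s.erase i, y i * y j * ∏ k ∈ (s.erase i).erase j, (1 + y k * u)) u := by
  simpa only [mul_sum, mul_assoc] using HasDerivAt.fun_sum fun i (_ : i ∈ s) ↦
    (hasDerivAt_prod_one_add_mul (s.erase i) y u).const_mul (y i)

variable [Fintype ι]

theorem gfun_second_deriv_general (a K : 𝕜) (y : ι → 𝕜) {δ : 𝕜} (hδ : δ ≠ 0) :
    let g : 𝕜 → 𝕜 := fun t ↦ t * (a + K * ∑ i, y i / t + ∏ i, (1 + y i / t) - 1)
    DifferentiableAt 𝕜 g δ ∧ DifferentiableAt 𝕜 (deriv g) δ ∧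
      deriv (deriv g) δ =
        δ⁻¹ ^ 3 * ∑ i, ∑ j ∈ univ.erase i,
          y i * y j * ∏ k ∈ (univ.erase i).erase j, (1 + y k / δ) := by
  intro g
  let f (u : 𝕜) : 𝕜 := a + K * ∑ i, y i * u + ∏ i, (1 + y i * u) - 1
  let f' (u : 𝕜) : 𝕜 := K * ∑ i, y i + ∑ i, y i * ∏ j ∈ univ.erase i, (1 + y j * u)
  have g_eq : g = fun t ↦ t • f t⁻¹ := by
    simp only [g, f, smul_eq_mul, div_eq_mul_inv]
  have hf (u : 𝕜) : HasDerivAt f (f' u) u := by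
    have hlin : HasDerivAt (fun v ↦ ∑ i, y i * v) (∑ i, y i) u := by
      simpa only [mul_one] using
        HasDerivAt.fun_sum fun i (_ : i ∈ univ) ↦ (hasDerivAt_id' u).const_mul (y i)
    exact (((hlin.const_mul K).const_add a).fun_add
      (hasDerivAt_prod_one_add_mul univ y u)).sub_const 1
  have hf' := (hasDerivAt_sum_mul_prod_erase_one_add_mul univ y δ⁻¹).const_add (K * ∑ i, y i)
  have hg : HasDerivAt g (f δ⁻¹ - δ⁻¹ • f' δ⁻¹) δ :=
    g_eq ▸ hasDerivAt_smul_comp_inv hδ (hf δ⁻¹)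
  have hg' : HasDerivAt (deriv g) (δ⁻¹ ^ 3 * ∑ i, ∑ j ∈ univ.erase i,
      y i * y j * ∏ k ∈ (univ.erase i).erase j, (1 + y k / δ)) δ := by
    simpa only [g_eq, smul_eq_mul, div_eq_mul_inv] using
      hasDerivAt_deriv_smul_comp_inv hδ (.of_forall hf) hf'
  exact ⟨hg.differentiableAt, hg'.differentiableAt, hg'.deriv⟩

end ProductOfAffine

/-- `g` is twice differentiable on `(0,∞)` and its second
derivative equals `δ⁻³ · ∑_{i≠j} yᵢ yⱼ ∏_{k≠i,j} (1 + yₖ/δ)`, the sum being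
over ordered pairs of distinct indices. -/
theorem gfun_second_deriv (n : ℕ) (hn : 2 ≤ n)
    (a K : ℝ) (ha : 0 ≤ a) (hK : 0 ≤ K)
    (y : Fin n → ℝ) (hy : ∀ i, 0 ≤ y i) :
    (∀ δ ∈ Set.Ioi (0:ℝ), DifferentiableAt ℝ (gfun a K y) δ) ∧
    (∀ δ ∈ Set.Ioi (0:ℝ), DifferentiableAt ℝ (deriv (gfun a K y)) δ) ∧
    ∀ δ ∈ Set.Ioi (0:ℝ),
      deriv (deriv (gfun a K y)) δ =
        δ⁻¹ ^ 3 * ∑ i, ∑ j ∈ univ.erase i,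
          y i * y j * ∏ k ∈ (univ.erase i).erase j, (1 + y k / δ) := by
  have h {δ : ℝ} (hδ : δ ∈ Set.Ioi 0) := gfun_second_deriv_general a K y hδ.out.ne'
  exact ⟨fun _ hδ ↦ (h hδ).1, fun _ hδ ↦ (h hδ).2.1, fun _ hδ ↦ (h hδ).2.2⟩
end
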